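/- Consider a linear dynamical system with sequences x, u, w, z, y and matrices A, B, C, D satisfying x_{t+1} = A x_t + B u_t + w_t and y_t = C x_t + D u_t + z_t for all t ≥ 0. Fix integers k, s ≥ 1, matrices α_1, …, α_s ∈ ℝ^{m×m}, and an integer t ≥ s, and set ŷ_{t+k} = y_{t+k} − Σ_{j=1}^{s} α_j y_{t−j}. Then ŷ_{t+k} = ( z_{t+k} − Σ_{j=1}^{s} α_j z_{t−j} ) + ( D u_{t+k} − Σ_{j=1}^{s} α_j D u_{t−j} ) + F_{α,k}(A) A^{t−s} x_0 + Σ_{i=1}^{k+s} F_{α,k}^{(i−1)}(A)(B u_{t+k−i} + w_{t+k−i}) + Σ_{i=k+s+1}^{t+k} F_{α,k}(A) A^{i−(k+s+1)} (B u_{t+k−i} + w_{t+k−i}). -/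

import Mathlib

/-- The matrix polynomial `F_{α,k}(A) = C A^{s+k} − α₁ C A^{s−1} − α₂ C A^{s−2} − ⋯ − α_s C`. -/
def Fmat {m n : ℕ} (C : Matrix (Fin m) (Fin n) ℝ) (A : Matrix (Fin n) (Fin n) ℝ)
    (α : ℕ → Matrix (Fin m) (Fin m) ℝ) (s k : ℕ) : Matrix (Fin m) (Fin n) ℝ :=
  C * A ^ (s + k) - ∑ j ∈ Finset.Icc 1 s, α j * C * A ^ (s - j)

/-- The truncated matrix polynomial `F_{α,k}^{(i)}(A)`, equal to `C A^i` for `0 ≤ i ≤ k` and to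
`C A^i − ∑_{j=1}^{i−k} α_j C A^{i−k−j}` for `k+1 ≤ i ≤ k+s`. -/
def FmatTrunc {m n : ℕ} (C : Matrix (Fin m) (Fin n) ℝ) (A : Matrix (Fin n) (Fin n) ℝ)
    (α : ℕ → Matrix (Fin m) (Fin m) ℝ) (k i : ℕ) : Matrix (Fin m) (Fin n) ℝ :=
  if i ≤ k then C * A ^ i
  else C * A ^ i - ∑ j ∈ Finset.Icc 1 (i - k), α j * C * A ^ (i - k - j)

theorem lds_state_range {n : ℕ} (A : Matrix (Fin n) (Fin n) ℝ) (x v : ℕ → Fin n → ℝ)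
    (hx : ∀ t : ℕ, x (t + 1) = A.mulVec (x t) + v t) (T : ℕ) :
    x T = (A ^ T).mulVec (x 0) + ∑ i ∈ Finset.range T, (A ^ i).mulVec (v (T - 1 - i)) := by
  induction T with
  | zero => simp
  | succ T ih =>
    rw [hx, Finset.sum_range_succ', ih, Matrix.mulVec_add, Matrix.mulVec_sum,
      Matrix.mulVec_mulVec, ← pow_succ', add_assoc]
    congr 2
    · apply Finset.sum_congr rfl
      intro i hi
      rw [Matrix.mulVec_mulVec, ← pow_succ']
      congr 2
      omega
    · simp

theorem lds_state_shift {n : ℕ} (A : Matrix (Fin n) (Fin n) ℝ) (x v : ℕ → Fin n → ℝ)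
    (hx : ∀ t : ℕ, x (t + 1) = A.mulVec (x t) + v t) (T d N : ℕ) (hN : T + d = N) :
    x T = (A ^ T).mulVec (x 0) + ∑ i ∈ Finset.Icc 1 N,
      (if d + 1 ≤ i then A ^ (i - 1 - d) else 0).mulVec (v (N - i)) := by
  rw [lds_state_range A x v hx T]
  congr 1
  symm
  rw [← Finset.sum_subset (s₁ := Finset.Icc (d + 1) N)]
  · refine Finset.sum_nbij' (fun i => i - 1 - d) (fun i => i + 1 + d) ?_ ?_ ?_ ?_ ?_
    · intro i hi
      simp only [Finset.mem_Icc, Finset.mem_range] at *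
      omega
    · intro i hi
      simp only [Finset.mem_Icc, Finset.mem_range] at *
      omega
    · intro i hi
      simp only [Finset.mem_Icc] at *
      omega
    · intro i hi
      omega
    · intro i hi
      simp only [Finset.mem_Icc] at hi
      rw [if_pos hi.1]
      congr 2
      omega
  · intro i hi
    simp only [Finset.mem_Icc] at *
    omega
  · intro i hi hi'
    simp only [Finset.mem_Icc] at *
    rw [if_neg (by omega), Matrix.zero_mulVec]

/-- For a linear dynamical system `x (t+1) = A x t + B u t + w t`,
`y t = C x t + D u t + z t`, integers `k, s ≥ 1`, matrices `α₁, …, α_s ∈ ℝ^{m×m}` and `t ≥ s`,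
the stabilized observation `ŷ_{t+k} = y_{t+k} − ∑_{j=1}^{s} α_j y_{t−j}` satisfies the expansion
of Fact 5.7 of the paper. -/
theorem lds_stabilized_observation_formula (n p m : ℕ)
    (A : Matrix (Fin n) (Fin n) ℝ) (B : Matrix (Fin n) (Fin p) ℝ)
    (C : Matrix (Fin m) (Fin n) ℝ) (D : Matrix (Fin m) (Fin p) ℝ)
    (x : ℕ → Fin n → ℝ) (u : ℕ → Fin p → ℝ) (w : ℕ → Fin n → ℝ)
    (z : ℕ → Fin m → ℝ) (y : ℕ → Fin m → ℝ)
    (hx : ∀ t : ℕ, x (t + 1) = A.mulVec (x t) + B.mulVec (u t) + w t)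
    (hy : ∀ t : ℕ, y t = C.mulVec (x t) + D.mulVec (u t) + z t)
    (k s : ℕ) (hk : 1 ≤ k) (hs : 1 ≤ s)
    (α : ℕ → Matrix (Fin m) (Fin m) ℝ)
    (t : ℕ) (ht : s ≤ t) :
    y (t + k) - ∑ j ∈ Finset.Icc 1 s, (α j).mulVec (y (t - j)) =
      (z (t + k) - ∑ j ∈ Finset.Icc 1 s, (α j).mulVec (z (t - j)))
      + (D.mulVec (u (t + k)) - ∑ j ∈ Finset.Icc 1 s, (α j).mulVec (D.mulVec (u (t - j))))
      + (Fmat C A α s k * A ^ (t - s)).mulVec (x 0)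
      + ∑ i ∈ Finset.Icc 1 (k + s),
          (FmatTrunc C A α k (i - 1)).mulVec (B.mulVec (u (t + k - i)) + w (t + k - i))
      + ∑ i ∈ Finset.Icc (k + s + 1) (t + k),
          (Fmat C A α s k * A ^ (i - (k + s + 1))).mulVec
            (B.mulVec (u (t + k - i)) + w (t + k - i)) := by
  set v : ℕ → Fin n → ℝ := fun t => B.mulVec (u t) + w t with hv
  have hxv : ∀ t : ℕ, x (t + 1) = A.mulVec (x t) + v t := by
    intro t
    rw [hx, hv, add_assoc]
  have key : C.mulVec (x (t + k)) - ∑ j ∈ Finset.Icc 1 s, (α j).mulVec (C.mulVec (x (t - j))) =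
      (Fmat C A α s k * A ^ (t - s)).mulVec (x 0)
      + ∑ i ∈ Finset.Icc 1 (k + s), (FmatTrunc C A α k (i - 1)).mulVec (v (t + k - i))
      + ∑ i ∈ Finset.Icc (k + s + 1) (t + k),
          (Fmat C A α s k * A ^ (i - (k + s + 1))).mulVec (v (t + k - i)) := by
    have h1 := lds_state_shift A x v hxv (t + k) 0 (t + k) rfl
    have h2 : ∀ j ∈ Finset.Icc 1 s, (α j).mulVec (C.mulVec (x (t - j))) =
        (α j * C * A ^ (t - j)).mulVec (x 0) + ∑ i ∈ Finset.Icc 1 (t + k),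
          (if k + j + 1 ≤ i then α j * C * A ^ (i - 1 - (k + j)) else 0).mulVec
            (v (t + k - i)) := by
      intro j hj
      simp only [Finset.mem_Icc] at hj
      rw [lds_state_shift A x v hxv (t - j) (k + j) (t + k) (by omega)]
      simp only [Matrix.mulVec_add, Matrix.mulVec_sum, Matrix.mulVec_mulVec,
        Matrix.mul_assoc]
      congr 1
      apply Finset.sum_congr rfl
      intro i _
      split_ifs <;> simp
    have hF : ∀ e, Fmat C A α s k * A ^ e =
        C * A ^ (s + k + e) - ∑ j ∈ Finset.Icc 1 s, α j * C * A ^ (s - j + e) := by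
      intro e
      simp only [Fmat, Matrix.sub_mul, Matrix.sum_mul, Matrix.mul_assoc, pow_add]
    have hG : C.mulVec (x (t + k)) -
        ∑ j ∈ Finset.Icc 1 s, (α j).mulVec (C.mulVec (x (t - j))) =
        (Fmat C A α s k * A ^ (t - s)).mulVec (x 0) + ∑ i ∈ Finset.Icc 1 (t + k),
          (C * A ^ (i - 1) - ∑ j ∈ Finset.Icc 1 s,
            (if k + j + 1 ≤ i then α j * C * A ^ (i - 1 - (k + j)) else 0)).mulVec
            (v (t + k - i)) := by
      rw [Finset.sum_congr rfl h2, h1, hF, Finset.sum_add_distrib, Finset.sum_comm]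
      simp only [Matrix.sub_mulVec, Matrix.sum_mulVec, Finset.sum_sub_distrib,
        Matrix.mulVec_add, Matrix.mulVec_sum, Matrix.mulVec_mulVec]
      have e1 : s + k + (t - s) = t + k := by omega
      have e2 : ∑ j ∈ Finset.Icc 1 s, (α j * C * A ^ (s - j + (t - s))).mulVec (x 0) =
          ∑ j ∈ Finset.Icc 1 s, (α j * C * A ^ (t - j)).mulVec (x 0) := by
        apply Finset.sum_congr rfl
        intro j hj
        simp only [Finset.mem_Icc] at hj
        congr 3
        omega
      have e3 : ∑ i ∈ Finset.Icc 1 (t + k),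
          (C * (if 0 + 1 ≤ i then A ^ (i - 1 - 0) else 0)).mulVec (v (t + k - i)) =
          ∑ i ∈ Finset.Icc 1 (t + k), (C * A ^ (i - 1)).mulVec (v (t + k - i)) := by
        apply Finset.sum_congr rfl
        intro i hi
        simp only [Finset.mem_Icc] at hi
        rw [if_pos (by omega), Nat.sub_zero]
      rw [e1, e2, e3]
      abel
    rw [hG, add_assoc]
    congr 1
    have hsplit : Finset.Icc 1 (t + k) =
        Finset.Icc 1 (k + s) ∪ Finset.Icc (k + s + 1) (t + k) := by
      ext i
      simp only [Finset.mem_union, Finset.mem_Icc]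
      omega
    have hdisj : Disjoint (Finset.Icc 1 (k + s)) (Finset.Icc (k + s + 1) (t + k)) := by
      rw [Finset.disjoint_left]
      intro i
      simp only [Finset.mem_Icc]
      omega
    rw [hsplit, Finset.sum_union hdisj]
    congr 1
    · apply Finset.sum_congr rfl
      intro i hi
      simp only [Finset.mem_Icc] at hi
      congr 1
      unfold FmatTrunc
      split_ifs with h
      · rw [Finset.sum_eq_zero, sub_zero]
        intro j hj
        simp only [Finset.mem_Icc] at hj
        rw [if_neg (by omega)]
      · congr 1
        symm
        rw [← Finset.sum_filter]
        apply Finset.sum_congr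
        · ext j
          simp only [Finset.mem_filter, Finset.mem_Icc]
          omega
        · intro j hj
          congr 2
          omega
    · apply Finset.sum_congr rfl
      intro i hi
      simp only [Finset.mem_Icc] at hi
      congr 1
      rw [hF]
      congr 1
      · congr 2
        omega
      · apply Finset.sum_congr rfl
        intro j hj
        simp only [Finset.mem_Icc] at hj
        rw [if_pos (by omega)]
        congr 2
        omega
  have hsum : ∑ j ∈ Finset.Icc 1 s, (α j).mulVec (y (t - j)) =
      ∑ j ∈ Finset.Icc 1 s, (α j).mulVec (C.mulVec (x (t - j)))
      + ∑ j ∈ Finset.Icc 1 s, (α j).mulVec (D.mulVec (u (t - j)))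
      + ∑ j ∈ Finset.Icc 1 s, (α j).mulVec (z (t - j)) := by
    rw [← Finset.sum_add_distrib, ← Finset.sum_add_distrib]
    apply Finset.sum_congr rfl
    intro j _
    rw [hy, Matrix.mulVec_add, Matrix.mulVec_add]
  have key2 := sub_eq_iff_eq_add.mp key
  rw [hsum, hy, key2]
  abel
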